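/- The equivalence relation on generalized rectangular diagrams generated by the elementary moves of type N (cyclic permutations, commutations, stabilizations and destabilizations of type N, end shifts of type N, and vertex additions) coincides with the equivalence relation generated by commutations, end shifts of type N and vertex additions alone. -/

import Mathlib

namespace RectDiag

/-- A generalized rectangular diagram: a finite subset of `ℝ²`, whose elements are
called the vertices of the diagram. -/
abbrev GRD := Finset (ℝ × ℝ)

/-- Two diagrams are combinatorially equivalent (and hence identified) if one maps onto
the other under `(x, y) ↦ (f x, g y)` for some strictly increasing `f g : ℝ → ℝ`. -/
def CombEquiv (R R' : GRD) : Prop :=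
  ∃ f g : ℝ → ℝ, StrictMono f ∧ StrictMono g ∧
    R' = R.image fun p => (f p.1, g p.2)

/-- Move every vertex on the vertical line `x = a` to the vertical line `x = b`. -/
noncomputable def moveCol (R : GRD) (a b : ℝ) : GRD :=
  R.image fun p => if p.1 = a then (b, p.2) else p

/-- Move every vertex on the horizontal line `y = a` to the horizontal line `y = b`. -/
noncomputable def moveRow (R : GRD) (a b : ℝ) : GRD :=
  R.image fun p => if p.2 = a then (p.1, b) else p

/-- Cyclic permutation: an extreme (rightmost, leftmost, top or bottom) edge is moved
to the opposite side of the diagram; only the coordinate perpendicular to the edge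
changes. -/
def CyclicPermutation (R R' : GRD) : Prop :=
  (∃ a b : ℝ, (∃ p ∈ R, p.1 = a) ∧
    (((∀ p ∈ R, p.1 ≤ a) ∧ ∀ p ∈ R, b < p.1) ∨
     ((∀ p ∈ R, a ≤ p.1) ∧ ∀ p ∈ R, p.1 < b)) ∧
    R' = moveCol R a b) ∨
  (∃ a b : ℝ, (∃ p ∈ R, p.2 = a) ∧
    (((∀ p ∈ R, p.2 ≤ a) ∧ ∀ p ∈ R, b < p.2) ∨
     ((∀ p ∈ R, a ≤ p.2) ∧ ∀ p ∈ R, p.2 < b)) ∧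
    R' = moveRow R a b)

/-- Two sets of reals interleave in the cyclic order: their elements alternate
`a₁ < b₁ < a₂ < b₂` (or with the roles of the two sets exchanged). -/
def Interleave (A B : ℝ → Prop) : Prop :=
  (∃ a₁, A a₁ ∧ ∃ b₁, B b₁ ∧ ∃ a₂, A a₂ ∧ ∃ b₂, B b₂ ∧ a₁ < b₁ ∧ b₁ < a₂ ∧ a₂ < b₂) ∨
  (∃ b₁, B b₁ ∧ ∃ a₁, A a₁ ∧ ∃ b₂, B b₂ ∧ ∃ a₂, A a₂ ∧ b₁ < a₁ ∧ a₁ < b₂ ∧ b₂ < a₂)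

/-- Exchange the vertical lines `x = a` and `x = b` of a diagram. -/
noncomputable def swapCols (R : GRD) (a b : ℝ) : GRD :=
  R.image fun p => if p.1 = a then (b, p.2) else if p.1 = b then (a, p.2) else p

/-- Exchange the horizontal lines `y = a` and `y = b` of a diagram. -/
noncomputable def swapRows (R : GRD) (a b : ℝ) : GRD :=
  R.image fun p => if p.2 = a then (p.1, b) else if p.2 = b then (p.1, a) else p

/-- Commutation: two neighboring parallel edges (no vertex lies strictly between the
two parallel lines containing them) that do not interleave exchange their positions. -/
def Commutation (R R' : GRD) : Prop :=
  (∃ a b : ℝ, a < b ∧ (∃ p ∈ R, p.1 = a) ∧ (∃ p ∈ R, p.1 = b) ∧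
    (∀ p ∈ R, ¬ (a < p.1 ∧ p.1 < b)) ∧
    ¬ Interleave (fun y => (a, y) ∈ R) (fun y => (b, y) ∈ R) ∧
    R' = swapCols R a b) ∨
  (∃ a b : ℝ, a < b ∧ (∃ p ∈ R, p.2 = a) ∧ (∃ p ∈ R, p.2 = b) ∧
    (∀ p ∈ R, ¬ (a < p.2 ∧ p.2 < b)) ∧
    ¬ Interleave (fun x => (x, a) ∈ R) (fun x => (x, b) ∈ R) ∧
    R' = swapRows R a b)

def strictlyBetween (a t b : ℝ) : Prop := (a < t ∧ t < b) ∨ (b < t ∧ t < a)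

/-- Stabilization: a vertex `(x, y)` is replaced by the three other corners of a small
square with corners `(x, y)`, `(x', y)`, `(x, y')`, `(x', y')` (fresh lines `x'`, `y'`,
with no vertex of the diagram strictly between the lines `x, x'` nor between `y, y'`).
The two new short edges (sides of the square through the corner `(x', y')`) emerge from
their common end downward-and-leftward or upward-and-rightward exactly when the square
lies to the upper right or to the lower left of the original vertex (type L,
`typeL = true`); for type N (`typeL = false`) they emerge upward-and-leftward or
downward-and-rightward, i.e. the square lies to the upper left or to the lower right. -/
def Stab (typeL : Bool) (R R' : GRD) : Prop :=
  ∃ x y x' y' : ℝ, (x, y) ∈ R ∧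
    (if typeL then ((x < x' ∧ y < y') ∨ (x' < x ∧ y' < y))
     else ((x' < x ∧ y < y') ∨ (x < x' ∧ y' < y))) ∧
    (∀ p ∈ R, ¬ strictlyBetween x p.1 x') ∧
    (∀ p ∈ R, ¬ strictlyBetween y p.2 y') ∧
    (∀ p ∈ R, p.1 ≠ x') ∧ (∀ p ∈ R, p.2 ≠ y') ∧
    R' = insert (x', y) (insert (x, y') (insert (x', y') (R.erase (x, y))))

/-- End shift.  For adjacent vertices `v₁`, `v₂` on an edge (no vertex of the diagram
between them on the edge), where for type L (`typeL = true`) the vertex `v₂` has the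
greater coordinate along the edge and for type N (`typeL = false`) the smaller one:
either the shifts of `v₁`, `v₂` by `ε > 0` in the positive perpendicular direction are
added and `v₁` is removed, or the shifts by `ε` in the negative perpendicular direction
are added and `v₂` is removed; `ε` is small enough that no vertex of the diagram lies
between (or on) the line through `v₁, v₂` and the line through the shifted vertices. -/
def EndShift (typeL : Bool) (R R' : GRD) : Prop :=
  (∃ a y₁ y₂ ε : ℝ, 0 < ε ∧ y₁ < y₂ ∧ (a, y₁) ∈ R ∧ (a, y₂) ∈ R ∧
    (∀ t : ℝ, (a, t) ∈ R → ¬ (y₁ < t ∧ t < y₂)) ∧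
    (((∀ p ∈ R, ¬ (a < p.1 ∧ p.1 ≤ a + ε)) ∧
       R' = insert (a + ε, y₁) (insert (a + ε, y₂)
         (R.erase (a, if typeL then y₁ else y₂)))) ∨
     ((∀ p ∈ R, ¬ (a - ε ≤ p.1 ∧ p.1 < a)) ∧
       R' = insert (a - ε, y₁) (insert (a - ε, y₂)
         (R.erase (a, if typeL then y₂ else y₁)))))) ∨
  (∃ a x₁ x₂ ε : ℝ, 0 < ε ∧ x₁ < x₂ ∧ (x₁, a) ∈ R ∧ (x₂, a) ∈ R ∧
    (∀ t : ℝ, (t, a) ∈ R → ¬ (x₁ < t ∧ t < x₂)) ∧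
    (((∀ p ∈ R, ¬ (a < p.2 ∧ p.2 ≤ a + ε)) ∧
       R' = insert (x₁, a + ε) (insert (x₂, a + ε)
         (R.erase (if typeL then x₁ else x₂, a)))) ∨
     ((∀ p ∈ R, ¬ (a - ε ≤ p.2 ∧ p.2 < a)) ∧
       R' = insert (x₁, a - ε) (insert (x₂, a - ε)
         (R.erase (if typeL then x₂ else x₁, a))))))

/-- Vertex addition: a new vertex is added on the vertical (respectively horizontal)
line through an existing vertex, provided no vertex of the diagram lies on the
horizontal (respectively vertical) line through the new vertex. -/
def VertexAddition (R R' : GRD) : Prop :=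
  ∃ v : ℝ × ℝ, v ∉ R ∧ R' = insert v R ∧
    (((∃ w ∈ R, w.1 = v.1) ∧ ∀ w ∈ R, w.2 ≠ v.2) ∨
     ((∃ w ∈ R, w.2 = v.2) ∧ ∀ w ∈ R, w.1 ≠ v.1))

/-- An elementary move of type L (`typeL = true`) or N (`typeL = false`): a cyclic
permutation, a commutation, a stabilization or destabilization of the given type, an
end shift of the given type, or a vertex addition. -/
def ElemMove (typeL : Bool) (R R' : GRD) : Prop :=
  CyclicPermutation R R' ∨ Commutation R R' ∨ Stab typeL R R' ∨ Stab typeL R' R ∨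
    EndShift typeL R R' ∨ VertexAddition R R'

/-- One step in a sequence of elementary moves of the given type; since diagrams are
identified up to combinatorial equivalence, combinatorially equivalent diagrams are
also related by a step. -/
def Step (typeL : Bool) (R R' : GRD) : Prop :=
  ElemMove typeL R R' ∨ CombEquiv R R'

/-- In the cyclic order (on `ℝ` closed up into a circle), the elements of `A`, then the
point `u`, then the elements of `B` occur in this cyclic order. -/
def CyclicBetween (A : Finset ℝ) (u : ℝ) (B : Finset ℝ) : Prop :=
  ((∀ a ∈ A, a < u) ∧ (∀ b ∈ B, u < b)) ∨
  ((∀ b ∈ B, u < b) ∧ (∀ a ∈ A, ∀ b ∈ B, b < a)) ∨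
  ((∀ a ∈ A, a < u) ∧ (∀ a ∈ A, ∀ b ∈ B, b < a))

/-- Edge breaking.  The vertices of a horizontal (respectively vertical) edge on the
line `c` are separated into two nonempty parts `S₁`, `S₂`, placed on neighboring lines
`c₁ ≤ c ≤ c₂` (`c₁ < c₂`, with no other vertex of the diagram between the lines `c₁`
and `c₂`), forming edges `e₁` (from `S₁`, on `c₁`) and `e₂` (from `S₂`, on `c₂`, the one
with the greater perpendicular coordinate); the two pieces are joined by a short edge on
a fresh line `u`, which in the cyclic order is greater than the coordinates of the
vertices of `e₂` and smaller than those of `e₁` for type L, and the other way around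
(the roles of `e₁` and `e₂` exchanged) for type N. -/
def EdgeBreaking (typeL : Bool) (R R' : GRD) : Prop :=
  (∃ c c₁ c₂ u : ℝ, ∃ S₁ S₂ : Finset ℝ,
    c₁ < c₂ ∧ c₁ ≤ c ∧ c ≤ c₂ ∧ S₁.Nonempty ∧ S₂.Nonempty ∧ Disjoint S₁ S₂ ∧
    (∀ x : ℝ, (x, c) ∈ R ↔ x ∈ S₁ ∪ S₂) ∧
    (∀ p ∈ R, p.1 ≠ u) ∧
    (∀ p ∈ R, c₁ ≤ p.2 ∧ p.2 ≤ c₂ → p.2 = c) ∧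
    (if typeL then CyclicBetween S₂ u S₁ else CyclicBetween S₁ u S₂) ∧
    R' = ((R.filter fun p => p.2 ≠ c) ∪ S₁.image (fun x => (x, c₁)) ∪
      S₂.image (fun x => (x, c₂)) ∪ {(u, c₁), (u, c₂)})) ∨
  (∃ c c₁ c₂ u : ℝ, ∃ S₁ S₂ : Finset ℝ,
    c₁ < c₂ ∧ c₁ ≤ c ∧ c ≤ c₂ ∧ S₁.Nonempty ∧ S₂.Nonempty ∧ Disjoint S₁ S₂ ∧
    (∀ y : ℝ, (c, y) ∈ R ↔ y ∈ S₁ ∪ S₂) ∧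
    (∀ p ∈ R, p.2 ≠ u) ∧
    (∀ p ∈ R, c₁ ≤ p.1 ∧ p.1 ≤ c₂ → p.1 = c) ∧
    (if typeL then CyclicBetween S₂ u S₁ else CyclicBetween S₁ u S₂) ∧
    R' = ((R.filter fun p => p.1 ≠ c) ∪ S₁.image (fun y => (c₁, y)) ∪
      S₂.image (fun y => (c₂, y)) ∪ {(c₁, u), (c₂, u)}))

/-- `p` lies in the open rectangle `(x₀, x₁) × (y₀, y₁)`. -/
def inRect (x₀ x₁ y₀ y₁ : ℝ) (p : ℝ × ℝ) : Prop :=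
  x₀ < p.1 ∧ p.1 < x₁ ∧ y₀ < p.2 ∧ p.2 < y₁

/-- A flype of type L (in the forward direction): for `x₀ < x₁ < x₂`, `y₀ < y₁ < y₂`,
with rectangles `r_ij = (x_i, x_{i+1}) × (y_j, y_{j+1})`: the rectangle `r₁₁` contains
no vertex; in each of `r₀₁` and `r₁₀`, of any two vertices the right one is higher; and
every vertex `v` in `r₀₀` has a vertex `v₀₁ ∈ r₀₁` with the same `x`-coordinate and a
vertex `v₁₀ ∈ r₁₀` with the same `y`-coordinate.  The move takes each such `v` to the
fourth corner of the rectangle with corners `v`, `v₀₁`, `v₁₀`, all other vertices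
staying fixed. -/
def FlypeLOnce (R R' : GRD) : Prop :=
  ∃ x₀ x₁ x₂ y₀ y₁ y₂ : ℝ, x₀ < x₁ ∧ x₁ < x₂ ∧ y₀ < y₁ ∧ y₁ < y₂ ∧
    (∀ p ∈ R, ¬ inRect x₁ x₂ y₁ y₂ p) ∧
    (∀ p ∈ R, ∀ q ∈ R, inRect x₀ x₁ y₁ y₂ p → inRect x₀ x₁ y₁ y₂ q →
      p.1 < q.1 → p.2 < q.2) ∧
    (∀ p ∈ R, ∀ q ∈ R, inRect x₁ x₂ y₀ y₁ p → inRect x₁ x₂ y₀ y₁ q →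
      p.1 < q.1 → p.2 < q.2) ∧
    ∃ φ : ℝ × ℝ → ℝ × ℝ,
      (∀ p ∈ R, ¬ inRect x₀ x₁ y₀ y₁ p → φ p = p) ∧
      (∀ p ∈ R, inRect x₀ x₁ y₀ y₁ p →
        ∃ q ∈ R, ∃ r ∈ R, inRect x₀ x₁ y₁ y₂ q ∧ q.1 = p.1 ∧
          inRect x₁ x₂ y₀ y₁ r ∧ r.2 = p.2 ∧ φ p = (r.1, q.2)) ∧
      R' = R.image φ

/-- A flype of type L: the move just described or its inverse. -/
def FlypeL (R R' : GRD) : Prop := FlypeLOnce R R' ∨ FlypeLOnce R' R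

/-- A fence diagram: posts are horizontal segments `[l, r] × {y}`, `y ∈ posts` (all
related by a vertical shift); wires are vertical segments recorded as
`(x, bottom level, top level)`, with endpoints interior to posts and no two wires on
the same vertical line. -/
structure Fence where
  posts : Finset ℝ
  l : ℝ
  r : ℝ
  wires : Finset (ℝ × ℝ × ℝ)
  hlr : l < r
  hx : ∀ w ∈ wires, l < w.1 ∧ w.1 < r
  hy : ∀ w ∈ wires, w.2.1 ∈ posts ∧ w.2.2 ∈ posts ∧ w.2.1 < w.2.2
  hinj : ∀ w ∈ wires, ∀ w' ∈ wires, w.1 = w'.1 → w = w'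

/-- Combinatorial equivalence of fence diagrams. -/
def FenceEquiv (F F' : Fence) : Prop :=
  ∃ f g : ℝ → ℝ, StrictMono f ∧ StrictMono g ∧
    F'.l = f F.l ∧ F'.r = f F.r ∧
    F'.posts = F.posts.image g ∧
    F'.wires = F.wires.image fun w => (f w.1, g w.2.1, g w.2.2)

/-- The wire on the vertical line `x` joining the posts at levels `p` and `q`. -/
noncomputable def mkWire (x p q : ℝ) : ℝ × ℝ × ℝ := (x, min p q, max p q)

/-- Twirl: the top (respectively bottom) post is moved to the opposite side, taking
along all wires attached to it. -/
def Twirl (F F' : Fence) : Prop :=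
  F'.l = F.l ∧ F'.r = F.r ∧
  ((∃ t b : ℝ, t ∈ F.posts ∧ (∀ y ∈ F.posts, y ≤ t) ∧ (∀ y ∈ F.posts, b < y) ∧
     F'.posts = insert b (F.posts.erase t) ∧
     F'.wires = F.wires.image fun w => if w.2.2 = t then (w.1, b, w.2.1) else w) ∨
   (∃ t b : ℝ, b ∈ F.posts ∧ (∀ y ∈ F.posts, b ≤ y) ∧ (∀ y ∈ F.posts, y < t) ∧
     F'.posts = insert t (F.posts.erase b) ∧
     F'.wires = F.wires.image fun w => if w.2.1 = b then (w.1, w.2.2, t) else w))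

/-- Turn: the rightmost (respectively leftmost) wire is moved to the opposite side. -/
def Turn (F F' : Fence) : Prop :=
  F'.l = F.l ∧ F'.r = F.r ∧ F'.posts = F.posts ∧
  ((∃ w ∈ F.wires, ∃ x : ℝ, (∀ w' ∈ F.wires, w'.1 ≤ w.1) ∧
     F.l < x ∧ (∀ w' ∈ F.wires, w' ≠ w → x < w'.1) ∧ x < w.1 ∧
     F'.wires = insert (x, w.2) (F.wires.erase w)) ∨
   (∃ w ∈ F.wires, ∃ x : ℝ, (∀ w' ∈ F.wires, w.1 ≤ w'.1) ∧
     x < F.r ∧ (∀ w' ∈ F.wires, w' ≠ w → w'.1 < x) ∧ w.1 < x ∧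
     F'.wires = insert (x, w.2) (F.wires.erase w)))

/-- Two wires interleave if exactly one endpoint level of one lies strictly between the
endpoint levels of the other. -/
def WiresInterleave (w w' : ℝ × ℝ × ℝ) : Prop :=
  (w.2.1 < w'.2.1 ∧ w'.2.1 < w.2.2 ∧ w.2.2 < w'.2.2) ∨
  (w'.2.1 < w.2.1 ∧ w.2.1 < w'.2.2 ∧ w'.2.2 < w.2.2)

/-- Slip: two neighboring non-interleaving wires exchange their horizontal positions. -/
def Slip (F F' : Fence) : Prop :=
  F'.l = F.l ∧ F'.r = F.r ∧ F'.posts = F.posts ∧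
  ∃ w₁ ∈ F.wires, ∃ w₂ ∈ F.wires, w₁.1 < w₂.1 ∧
    (∀ w ∈ F.wires, ¬ (w₁.1 < w.1 ∧ w.1 < w₂.1)) ∧
    ¬ WiresInterleave w₁ w₂ ∧
    F'.wires = insert (w₂.1, w₁.2) (insert (w₁.1, w₂.2) ((F.wires.erase w₁).erase w₂))

/-- `a`, `b`, `c` occur in this cyclic order on `ℝ` closed up into a circle. -/
def CyclicOrd3 (a b c : ℝ) : Prop :=
  (a < b ∧ b < c) ∨ (b < c ∧ c < a) ∨ (c < a ∧ a < b)

/-- Slide: given two neighboring wires, the left joining posts at levels `a` and `b`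
and the right joining posts at levels `a` and `c` with `a < b < c < a` in the cyclic
order, they are replaced by two wires at the same horizontal positions, the left
joining levels `b` and `c` and the right joining levels `b` and `a`. -/
def Slide (F F' : Fence) : Prop :=
  F'.l = F.l ∧ F'.r = F.r ∧ F'.posts = F.posts ∧
  ∃ a b c x₁ x₂ : ℝ, x₁ < x₂ ∧ CyclicOrd3 a b c ∧
    mkWire x₁ a b ∈ F.wires ∧ mkWire x₂ a c ∈ F.wires ∧
    (∀ w ∈ F.wires, ¬ (x₁ < w.1 ∧ w.1 < x₂)) ∧
    F'.wires = insert (mkWire x₁ b c) (insert (mkWire x₂ b a)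
      ((F.wires.erase (mkWire x₁ a b)).erase (mkWire x₂ a c)))

/-- Inflation: a new post is added at a fresh vertical level and joined to some
existing post by one new wire (on a fresh vertical line). -/
def Inflation (F F' : Fence) : Prop :=
  F'.l = F.l ∧ F'.r = F.r ∧
  ∃ n m x : ℝ, n ∉ F.posts ∧ m ∈ F.posts ∧
    F.l < x ∧ x < F.r ∧ (∀ w ∈ F.wires, w.1 ≠ x) ∧
    F'.posts = insert n F.posts ∧
    F'.wires = insert (mkWire x n m) F.wires

/-- A fence move: a twirl, a turn, a slip, a slide, an inflation or a deflation. -/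
def FenceMove (F F' : Fence) : Prop :=
  Twirl F F' ∨ Turn F F' ∨ Slip F F' ∨ Slide F F' ∨ Inflation F F' ∨ Inflation F' F

/-- One step in a sequence of fence moves; combinatorially equivalent fence diagrams
are identified. -/
def FenceStep (F F' : Fence) : Prop := FenceMove F F' ∨ FenceEquiv F F'

/-- `R(F)`: the generalized rectangular diagram whose vertices are the endpoints of
the wires of the fence diagram `F`. -/
noncomputable def fenceToGRD (F : Fence) : GRD :=
  F.wires.image (fun w => (w.1, w.2.1)) ∪ F.wires.image (fun w => (w.1, w.2.2))

/-- Every vertical edge of the diagram contains exactly two vertices. -/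
def VertTwo (R : GRD) : Prop :=
  ∀ a : ℝ, (∃ y : ℝ, (a, y) ∈ R) →
    ∃ y₁ y₂ : ℝ, y₁ < y₂ ∧ ∀ y : ℝ, ((a, y) ∈ R ↔ (y = y₁ ∨ y = y₂))

/-- `F` is a fence diagram `F(R)` of the diagram `R` (each of whose vertical edges is
assumed to contain exactly two vertices): its wires are the vertical edges of `R` and
its posts are horizontal segments at exactly the levels of the horizontal edges of
`R`. -/
def IsFenceOf (R : GRD) (F : Fence) : Prop :=
  F.posts = R.image Prod.snd ∧
  ∀ w : ℝ × ℝ × ℝ,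
    (w ∈ F.wires ↔ ((w.1, w.2.1) ∈ R ∧ (w.1, w.2.2) ∈ R ∧ w.2.1 < w.2.2))


def MM (R R' : GRD) : Prop :=
  Commutation R R' ∨ EndShift false R R' ∨ VertexAddition R R' ∨ CombEquiv R R'

def EE : GRD → GRD → Prop := Relation.EqvGen MM

theorem EE.refl (R : GRD) : EE R R := Relation.EqvGen.refl R
theorem EE.symm {R R' : GRD} (h : EE R R') : EE R' R := Relation.EqvGen.symm _ _ h
theorem EE.trans {R R' R'' : GRD} (h : EE R R') (h' : EE R' R'') : EE R R'' :=
  Relation.EqvGen.trans _ _ _ h h'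
theorem EE.comm {R R' : GRD} (h : Commutation R R') : EE R R' :=
  Relation.EqvGen.rel _ _ (Or.inl h)
theorem EE.shift {R R' : GRD} (h : EndShift false R R') : EE R R' :=
  Relation.EqvGen.rel _ _ (Or.inr (Or.inl h))
theorem EE.add {R R' : GRD} (h : VertexAddition R R') : EE R R' :=
  Relation.EqvGen.rel _ _ (Or.inr (Or.inr (Or.inl h)))
theorem EE.comb {R R' : GRD} (h : CombEquiv R R') : EE R R' :=
  Relation.EqvGen.rel _ _ (Or.inr (Or.inr (Or.inr h)))

theorem fresh_below (F : Finset ℝ) (v : ℝ) : ∃ w < v, ∀ t ∈ F, t < v → t < w := by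
  induction F using Finset.induction_on with
  | empty => exact ⟨v - 1, by linarith, by simp⟩
  | insert s F _ ih =>
    obtain ⟨w, hw, h⟩ := ih
    by_cases hs : s < v
    · refine ⟨(max w s + v) / 2, ?_, ?_⟩
      · have := max_lt hw hs
        linarith
      · intro t ht htv
        have h1 := max_lt hw hs
        have h2 := le_max_left w s
        have h3 := le_max_right w s
        rcases Finset.mem_insert.1 ht with rfl | ht
        · linarith
        · have := h t ht htv
          linarith
    · refine ⟨w, hw, ?_⟩
      intro t ht htv
      rcases Finset.mem_insert.1 ht with rfl | ht
      · exact absurd htv hs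
      · exact h t ht htv

theorem fresh_above (F : Finset ℝ) (v : ℝ) : ∃ w, v < w ∧ ∀ t ∈ F, v < t → w < t := by
  obtain ⟨w, hw, h⟩ := fresh_below (F.image (fun t => -t)) (-v)
  refine ⟨-w, by linarith, ?_⟩
  intro t ht hvt
  have := h (-t) (Finset.mem_image_of_mem _ ht) (by linarith)
  linarith

theorem shift_fun (lo p q hi : ℝ) (h1 : lo < p) (h2 : lo < q) (h3 : p < hi) (h4 : q < hi) :
    ∃ g : ℝ → ℝ, StrictMono g ∧ g p = q ∧ (∀ t, t ≤ lo → g t = t) ∧ (∀ t, hi ≤ t → g t = t) := by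
  have a1 : 0 < (q - lo) / (p - lo) := div_pos (by linarith) (by linarith)
  have a2 : 0 < (hi - q) / (hi - p) := div_pos (by linarith) (by linarith)
  have e1 : (q - lo) / (p - lo) * (p - lo) = q - lo := div_mul_cancel₀ _ (by linarith)
  have e2 : (hi - q) / (hi - p) * (hi - p) = hi - q := div_mul_cancel₀ _ (by linarith)
  set r := (q - lo) / (p - lo)
  set s := (hi - q) / (hi - p)
  refine ⟨fun t => if t ≤ lo then t else if t ≤ p then lo + r * (t - lo) else
    if t < hi then hi - s * (hi - t) else t, ?_, ?_, ?_, ?_⟩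
  · intro x y hxy
    dsimp only
    split_ifs <;> nlinarith
  · dsimp only
    rw [if_neg (by linarith), if_pos le_rfl]; linarith
  · intro t ht
    dsimp only
    rw [if_pos ht]
  · intro t ht
    dsimp only
    rw [if_neg (by linarith), if_neg (by linarith), if_neg (by linarith)]

/-- Move a row to another level with nothing in between. -/
theorem rowMove (S : GRD) (V : Finset ℝ) (p q : ℝ)
    (hS : ∀ z ∈ S, ¬ (min p q ≤ z.2 ∧ z.2 ≤ max p q)) :
    EE (S ∪ V ×ˢ {p}) (S ∪ V ×ˢ {q}) := by
  obtain ⟨lo, hlo, hl⟩ := fresh_below (S.image Prod.snd) (min p q)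
  obtain ⟨hi, hhi, hh⟩ := fresh_above (S.image Prod.snd) (max p q)
  have := min_le_left p q
  have := min_le_right p q
  have := le_max_left p q
  have := le_max_right p q
  obtain ⟨g, hg, hgp, hg1, hg2⟩ := shift_fun lo p q hi (by linarith) (by linarith)
    (by linarith) (by linarith)
  apply EE.comb
  refine ⟨id, g, strictMono_id, hg, ?_⟩
  have key : ∀ z ∈ S, g z.2 = z.2 := by
    intro z hz
    have hz' : z.2 ∈ S.image Prod.snd := Finset.mem_image_of_mem _ hz
    by_cases h : z.2 < min p q
    · exact hg1 _ (hl _ hz' h).le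
    · apply hg2
      refine (hh _ hz' ?_).le
      by_contra h'
      exact hS z hz ⟨not_lt.1 h, not_lt.1 h'⟩
  rw [Finset.image_union]
  congr 1
  · ext z
    simp only [Finset.mem_image, id]
    constructor
    · intro hz
      exact ⟨z, hz, by rw [key z hz]⟩
    · rintro ⟨w, hw, rfl⟩
      rw [key w hw]; exact hw
  · ext ⟨x, t⟩
    simp only [Finset.mem_image, Finset.mem_product, Finset.mem_singleton, Prod.exists, id,
      Prod.mk.injEq]
    constructor
    · rintro ⟨hx, rfl⟩
      exact ⟨x, p, ⟨hx, rfl⟩, rfl, hgp⟩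
    · rintro ⟨x', t', ⟨h, rfl⟩, rfl, rfl⟩
      exact ⟨h, hgp⟩

theorem G1 (C : Finset ℝ) (a b : ℝ) (hba : b < a) (hC : ∀ c ∈ C, b < c ∧ c < a) :
    ∀ (S : GRD) (y0 y1 : ℝ), y0 < y1 → (∀ p ∈ S, ¬ (y0 ≤ p.2 ∧ p.2 ≤ y1)) →
    EE (S ∪ (insert b (insert a C)) ×ˢ {y1})
      (S ∪ (insert a C) ×ˢ {y0} ∪ ({b, a} : Finset ℝ) ×ˢ {y1}) := by
  induction C using Finset.induction_on_max with
  | empty =>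
    intro S y0 y1 hy hS
    apply EE.add
    refine ⟨(a, y0), ?_, ?_, Or.inl ⟨⟨(a, y1), ?_, rfl⟩, ?_⟩⟩
    · have := fun h => hS (a, y0) h ⟨le_rfl, hy.le⟩
      simp only [Finset.mem_union, Finset.mem_product, Finset.mem_insert, Finset.mem_singleton]
      exact fun h => h.elim this (fun h => hy.ne h.2)
    · ext ⟨x, t⟩
      simp
      tauto
    · simp
    · intro w hw
      have := hS w
      simp at hw
      grind
  | insert β C hβ ih =>
    intro S y0 y1 hy hS
    obtain ⟨y00, hy0, hf⟩ := fresh_below (S.image Prod.snd) y0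
    have hS' : ∀ p ∈ S, ¬ (y00 ≤ p.2 ∧ p.2 ≤ y1) := by
      intro p hp h
      by_cases h' : p.2 < y0
      · have := hf p.2 (Finset.mem_image_of_mem _ hp) h'
        linarith
      · exact hS p hp ⟨not_lt.1 h', h.2⟩
    have hβa := hC β (by simp)
    have hCa : ∀ c ∈ C, b < c ∧ c < a := fun c hc => hC c (by simp [hc])
    have hβC : β ∉ C := fun h => lt_irrefl _ (hβ _ h)
    have haC : a ∉ C := fun h => lt_irrefl _ (hCa _ h).2
    have hbC : b ∉ C := fun h => lt_irrefl _ (hCa _ h).1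
    have s1 : EE (S ∪ (insert b (insert a (insert β C))) ×ˢ {y1})
        ((S ∪ ({β, a} : Finset ℝ) ×ˢ {y00}) ∪ (insert b (insert a C)) ×ˢ {y1}) := by
      apply EE.shift
      refine Or.inr ⟨y1, β, a, y1 - y00, by linarith, hβa.2, by simp, by simp, ?_, Or.inr ⟨?_, ?_⟩⟩
      · intro t ht h
        have := hS' (t, y1)
        simp at ht
        grind
      · intro p hp h
        have := hS' p
        simp at hp
        grind
      · ext ⟨x, t⟩
        have := hS' (x, t)
        simp
        grind
    have s2 := ih hCa (S ∪ ({β, a} : Finset ℝ) ×ˢ {y00}) y0 y1 hy (by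
      intro p hp
      have := hS p
      simp at hp
      grind)
    have s3 : EE (S ∪ (insert a (insert β C)) ×ˢ {y0} ∪ ({b, a} : Finset ℝ) ×ˢ {y1})
        (S ∪ ({β, a} : Finset ℝ) ×ˢ {y00} ∪ (insert a C) ×ˢ {y0} ∪
          ({b, a} : Finset ℝ) ×ˢ {y1}) := by
      apply EE.shift
      refine Or.inr ⟨y0, β, a, y0 - y00, by linarith, hβa.2, by simp, by simp, ?_, Or.inr ⟨?_, ?_⟩⟩
      · intro t ht h
        have := hS' (t, y0)
        simp at ht
        grind
      · intro p hp h
        have := hS' p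
        simp at hp
        grind
      · ext ⟨x, t⟩
        have := hS' (x, t)
        simp
        grind
    exact (s1.trans s2).trans s3.symm

theorem G2 (C : Finset ℝ) (a b : ℝ) (hba : b < a) (hC : ∀ c ∈ C, b < c ∧ c < a) :
    ∀ (S : GRD) (y0 y1 : ℝ), y0 < y1 → (∀ p ∈ S, ¬ (y0 ≤ p.2 ∧ p.2 ≤ y1)) →
    EE (S ∪ (insert b (insert a C)) ×ˢ {y0})
      (S ∪ (insert b C) ×ˢ {y1} ∪ ({b, a} : Finset ℝ) ×ˢ {y0}) := by
  induction C using Finset.induction_on_min with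
  | empty =>
    intro S y0 y1 hy hS
    apply EE.add
    refine ⟨(b, y1), ?_, ?_, Or.inl ⟨⟨(b, y0), ?_, rfl⟩, ?_⟩⟩
    · have := fun h => hS (b, y1) h ⟨hy.le, le_rfl⟩
      simp only [Finset.mem_union, Finset.mem_product, Finset.mem_insert, Finset.mem_singleton]
      exact fun h => h.elim this (fun h => hy.ne' h.2)
    · ext ⟨x, t⟩
      simp
      tauto
    · simp
    · intro w hw
      have := hS w
      simp at hw
      grind
  | insert β C hβ ih =>
    intro S y0 y1 hy hS
    obtain ⟨y11, hy1, hf⟩ := fresh_above (S.image Prod.snd) y1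
    have hS' : ∀ p ∈ S, ¬ (y0 ≤ p.2 ∧ p.2 ≤ y11) := by
      intro p hp h
      by_cases h' : y1 < p.2
      · have := hf p.2 (Finset.mem_image_of_mem _ hp) h'
        linarith
      · exact hS p hp ⟨h.1, not_lt.1 h'⟩
    have hβa := hC β (by simp)
    have hCa : ∀ c ∈ C, b < c ∧ c < a := fun c hc => hC c (by simp [hc])
    have hβC : β ∉ C := fun h => lt_irrefl _ (hβ _ h)
    have haC : a ∉ C := fun h => lt_irrefl _ (hCa _ h).2
    have hbC : b ∉ C := fun h => lt_irrefl _ (hCa _ h).1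
    have s1 : EE (S ∪ (insert b (insert a (insert β C))) ×ˢ {y0})
        ((S ∪ ({b, β} : Finset ℝ) ×ˢ {y11}) ∪ (insert b (insert a C)) ×ˢ {y0}) := by
      apply EE.shift
      refine Or.inr ⟨y0, b, β, y11 - y0, by linarith, hβa.1, by simp, by simp, ?_, Or.inl ⟨?_, ?_⟩⟩
      · intro t ht h
        have := hS' (t, y0)
        simp at ht
        grind
      · intro p hp h
        have := hS' p
        simp at hp
        grind
      · ext ⟨x, t⟩
        have := hS' (x, t)
        simp
        grind
    have s2 := ih hCa (S ∪ ({b, β} : Finset ℝ) ×ˢ {y11}) y0 y1 hy (by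
      intro p hp
      have := hS p
      simp at hp
      grind)
    have s3 : EE (S ∪ (insert b (insert β C)) ×ˢ {y1} ∪ ({b, a} : Finset ℝ) ×ˢ {y0})
        (S ∪ ({b, β} : Finset ℝ) ×ˢ {y11} ∪ (insert b C) ×ˢ {y1} ∪
          ({b, a} : Finset ℝ) ×ˢ {y0}) := by
      apply EE.shift
      refine Or.inr ⟨y1, b, β, y11 - y1, by linarith, hβa.1, by simp, by simp, ?_, Or.inl ⟨?_, ?_⟩⟩
      · intro t ht h
        have := hS' (t, y1)
        simp at ht
        grind
      · intro p hp h
        have := hS' p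
        simp at hp
        grind
      · ext ⟨x, t⟩
        have := hS' (x, t)
        simp
        grind
    exact (s1.trans s2).trans s3.symm

/-- The free row passes one other row. -/
theorem pass (S : GRD) (V : Finset ℝ) (hV : V.Nonempty) (a b u v u' : ℝ)
    (hVab : ∀ c ∈ V, b ≤ c ∧ c ≤ a) (huv : u < v) (hvu : v < u')
    (hS : ∀ p ∈ S, ¬ (u ≤ p.2 ∧ p.2 ≤ u')) :
    EE (S ∪ V ×ˢ {v} ∪ ({b, a} : Finset ℝ) ×ˢ {u})
      (S ∪ V ×ˢ {v} ∪ ({b, a} : Finset ℝ) ×ˢ {u'}) := by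
  have s1 : EE (S ∪ V ×ˢ {v} ∪ ({b, a} : Finset ℝ) ×ˢ {u})
      (S ∪ V ×ˢ {u} ∪ ({b, a} : Finset ℝ) ×ˢ {v}) := by
    apply EE.comm
    obtain ⟨c, hc⟩ := hV
    refine Or.inr ⟨u, v, huv, ⟨(b, u), by simp, rfl⟩, ⟨(c, v), by simp [hc], rfl⟩, ?_, ?_, ?_⟩
    · intro p hp
      have := hS p
      simp at hp
      grind
    · have hu : ∀ x, (x, u) ∈ S ∪ V ×ˢ {v} ∪ ({b, a} : Finset ℝ) ×ˢ {u} → x = b ∨ x = a := by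
        intro x hx
        have := hS (x, u)
        simp at hx
        grind
      have hv : ∀ x, (x, v) ∈ S ∪ V ×ˢ {v} ∪ ({b, a} : Finset ℝ) ×ˢ {u} → b ≤ x ∧ x ≤ a := by
        intro x hx
        have := hS (x, v)
        simp at hx
        grind
      rintro (⟨a1, h1, b1, h2, a2, h3, b2, h4, h5, h6, h7⟩ | ⟨b1, h1, a1, h2, b2, h3, a2, h4, h5, h6, h7⟩)
      · have := hu _ h1
        have := hv _ h2
        have := hu _ h3
        have := hv _ h4
        grind
      · have := hv _ h1
        have := hu _ h2
        have := hv _ h3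
        have := hu _ h4
        grind
    · unfold swapRows
      have hid : S.image (fun p : ℝ × ℝ => if p.2 = u then (p.1, v) else
          if p.2 = v then (p.1, u) else p) = S := by
        conv_rhs => rw [← Finset.image_id (s := S)]
        apply Finset.image_congr
        intro p hp
        have := hS p hp
        have h1 : p.2 ≠ u := by rintro h; exact this ⟨h.ge, by linarith⟩
        have h2 : p.2 ≠ v := by rintro h; exact this ⟨by linarith, by linarith⟩
        simp [h1, h2]
      rw [Finset.image_union, Finset.image_union, hid]
      congr 1
      · congr 1
        ext ⟨x, t⟩
        simp only [Finset.mem_image, Finset.mem_product, Finset.mem_singleton, Prod.exists]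
        constructor
        · rintro ⟨hx, rfl⟩
          exact ⟨x, v, ⟨hx, rfl⟩, by simp [huv.ne']⟩
        · rintro ⟨x', t', ⟨h, rfl⟩, h2⟩
          simp [huv.ne'] at h2
          grind
      · ext ⟨x, t⟩
        simp only [Finset.mem_image, Finset.mem_product, Finset.mem_singleton, Prod.exists]
        constructor
        · rintro ⟨hx, rfl⟩
          exact ⟨x, u, ⟨hx, rfl⟩, by simp⟩
        · rintro ⟨x', t', ⟨h, rfl⟩, h2⟩
          simp at h2
          grind
  have s2 := rowMove (S ∪ V ×ˢ {u}) {b, a} v u' (by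
    intro z hz
    have := hS z
    rw [min_eq_left hvu.le, max_eq_right hvu.le]
    simp at hz
    grind)
  have s3 := rowMove (S ∪ ({b, a} : Finset ℝ) ×ˢ {u'}) V u v (by
    intro z hz
    have := hS z
    rw [min_eq_left huv.le, max_eq_right huv.le]
    simp at hz
    grind)
  rw [Finset.union_right_comm, Finset.union_right_comm S _ (V ×ˢ {v})] at s3
  exact (s1.trans s2).trans s3

theorem freeMoveLt (D : GRD) (a b : ℝ) (hD : ∀ p ∈ D, b ≤ p.1 ∧ p.1 ≤ a) :
    ∀ (n : ℕ) (u u' : ℝ), u < u' → (∀ p ∈ D, p.2 ≠ u) → (∀ p ∈ D, p.2 ≠ u') →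
      ((D.image Prod.snd).filter (fun t => u < t ∧ t < u')).card = n →
      EE (D ∪ ({b, a} : Finset ℝ) ×ˢ {u}) (D ∪ ({b, a} : Finset ℝ) ×ˢ {u'}) := by
  intro n
  induction n using Nat.strong_induction_on with
  | _ n ih =>
  intro u u' huu hu hu' hn
  by_cases hne : ((D.image Prod.snd).filter (fun t => u < t ∧ t < u')).Nonempty
  · set F := (D.image Prod.snd).filter (fun t => u < t ∧ t < u') with hF
    set v := F.max' hne with hv
    have hvF : v ∈ F := F.max'_mem hne
    have hvm : ∀ t ∈ F, t ≤ v := fun t ht => F.le_max' t ht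
    clear_value v
    obtain ⟨hv1, hv2, hv3⟩ : v ∈ D.image Prod.snd ∧ u < v ∧ v < u' := by
      simpa [hF] using hvF
    obtain ⟨w, hw, hwf⟩ := fresh_below (insert u (D.image Prod.snd)) v
    have huw : u < w := hwf u (by simp) hv2
    have hwD : ∀ p ∈ D, p.2 < v → p.2 < w := fun p hp h =>
      hwf p.2 (Finset.mem_insert_of_mem (Finset.mem_image_of_mem _ hp)) h
    have hwne : ∀ p ∈ D, p.2 ≠ w := by
      intro p hp h
      have := hwD p hp (by linarith)
      linarith
    have s1 := ih ((D.image Prod.snd).filter (fun t => u < t ∧ t < w)).card (by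
      rw [← hn]
      apply Finset.card_lt_card
      refine ⟨?_, ?_⟩
      · intro t ht
        rw [hF]
        simp only [Finset.mem_filter] at ht ⊢
        exact ⟨ht.1, ht.2.1, by linarith [ht.2.2]⟩
      · intro h
        have := h hvF
        simp only [Finset.mem_filter] at this
        linarith [this.2.2]) u w huw hu hwne rfl
    have s2 := pass (D.filter (fun p => p.2 ≠ v)) ((D.filter (fun p => p.2 = v)).image Prod.fst) (by
      obtain ⟨p, hp, hpv⟩ := Finset.mem_image.1 hv1
      exact ⟨p.1, Finset.mem_image_of_mem _ (by simp [hp, hpv])⟩) a b w v u' (by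
      intro c hc
      obtain ⟨p, hp, rfl⟩ := Finset.mem_image.1 hc
      exact hD p (Finset.mem_filter.1 hp).1) hw hv3 (by
      rintro p hp ⟨h1, h2⟩
      simp only [Finset.mem_filter] at hp
      have h3 := hwD p hp.1
      have h4 := hu' p hp.1
      have h5 := hvm p.2
      have h6 : p.2 ∈ F := by
        rw [hF]
        simp only [Finset.mem_filter]
        exact ⟨Finset.mem_image_of_mem _ hp.1, by linarith, lt_of_le_of_ne h2 h4⟩
      have h7 := lt_of_le_of_ne (h5 h6) hp.2
      have := h3 h7
      linarith)
    have e : D.filter (fun p => p.2 ≠ v) ∪ ((D.filter (fun p => p.2 = v)).image Prod.fst) ×ˢ {v}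
        = D := by
      ext ⟨x, t⟩
      simp
      grind
    rw [e] at s2
    exact s1.trans s2
  · apply rowMove
    rw [min_eq_left huu.le, max_eq_right huu.le]
    rintro z hz ⟨h1, h2⟩
    apply hne
    refine ⟨z.2, ?_⟩
    simp only [Finset.mem_filter]
    exact ⟨Finset.mem_image_of_mem _ hz, lt_of_le_of_ne h1 (hu z hz).symm,
      lt_of_le_of_ne h2 (hu' z hz)⟩

theorem freeMove (D : GRD) (a b : ℝ) (hD : ∀ p ∈ D, b ≤ p.1 ∧ p.1 ≤ a) (u u' : ℝ)
    (hu : ∀ p ∈ D, p.2 ≠ u) (hu' : ∀ p ∈ D, p.2 ≠ u') :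
    EE (D ∪ ({b, a} : Finset ℝ) ×ˢ {u}) (D ∪ ({b, a} : Finset ℝ) ×ˢ {u'}) := by
  rcases lt_trichotomy u u' with h | h | h
  · exact freeMoveLt D a b hD _ u u' h hu hu' rfl
  · subst h; exact EE.refl _
  · exact (freeMoveLt D a b hD _ u' u h hu' hu rfl).symm

/-- One vertex slides from the column `a` to the column `b`. -/
theorem slide1 (D : GRD) (a b y u : ℝ) (hba : b < a) (hD : ∀ p ∈ D, b ≤ p.1 ∧ p.1 ≤ a)
    (hy : ∀ p ∈ D, p.2 = y → b < p.1 ∧ p.1 < a)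
    (hu : ∀ p ∈ D, p.2 ≠ u) (huy : u ≠ y) :
    EE (insert (a, y) D ∪ ({b, a} : Finset ℝ) ×ˢ {u})
      (insert (b, y) D ∪ ({b, a} : Finset ℝ) ×ˢ {u}) := by
  obtain ⟨u1, hu1, hf1⟩ := fresh_above (D.image Prod.snd) y
  obtain ⟨u0, hu0, hf0⟩ := fresh_below (D.image Prod.snd) y
  have h1 : ∀ p ∈ D, y < p.2 → u1 < p.2 := fun p hp h => hf1 _ (Finset.mem_image_of_mem _ hp) h
  have h0 : ∀ p ∈ D, p.2 < y → p.2 < u0 := fun p hp h => hf0 _ (Finset.mem_image_of_mem _ hp) h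
  have s1 := freeMove (insert (a, y) D) a b (by
    intro p hp
    rcases Finset.mem_insert.1 hp with rfl | hp
    · exact ⟨hba.le, le_rfl⟩
    · exact hD p hp) u u1 (by
    intro p hp
    rcases Finset.mem_insert.1 hp with rfl | hp
    · exact huy.symm
    · exact hu p hp) (by
    intro p hp h
    rcases Finset.mem_insert.1 hp with rfl | hp
    · simp at h; linarith
    · have := h1 p hp (by linarith)
      linarith)
  have s4 := freeMove (insert (b, y) D) a b (by
    intro p hp
    rcases Finset.mem_insert.1 hp with rfl | hp
    · exact ⟨le_rfl, hba.le⟩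
    · exact hD p hp) u u0 (by
    intro p hp
    rcases Finset.mem_insert.1 hp with rfl | hp
    · exact huy.symm
    · exact hu p hp) (by
    intro p hp h
    rcases Finset.mem_insert.1 hp with rfl | hp
    · simp at h; linarith
    · have := h0 p hp (by linarith)
      linarith)
  set S := D.filter (fun p => p.2 ≠ y) with hS
  set C := (D.filter (fun p => p.2 = y)).image Prod.fst with hCdef
  have hC : ∀ c ∈ C, b < c ∧ c < a := by
    intro c hc
    obtain ⟨p, hp, rfl⟩ := Finset.mem_image.1 hc
    exact hy p (Finset.mem_filter.1 hp).1 (Finset.mem_filter.1 hp).2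
  have hSr : ∀ p ∈ S, ¬ (u0 ≤ p.2 ∧ p.2 ≤ u1) := by
    rintro p hp ⟨h2, h3⟩
    rw [hS, Finset.mem_filter] at hp
    rcases lt_or_gt_of_ne hp.2 with h | h
    · have := h0 p hp.1 h
      linarith
    · have := h1 p hp.1 h
      linarith
  have s2 := G1 C a b hba hC S y u1 hu1 (fun p hp h => hSr p hp ⟨by linarith, h.2⟩)
  have s3 := G2 C a b hba hC S u0 y hu0 (fun p hp h => hSr p hp ⟨h.1, by linarith⟩)
  have sm := rowMove S (insert b (insert a C)) u1 u0 (by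
    have : u0 ≤ u1 := by linarith
    rw [min_eq_right this, max_eq_left this]
    exact hSr)
  have e : ∀ z, S ∪ (insert z C) ×ˢ {y} = insert (z, y) D := by
    intro z
    ext ⟨x, t⟩
    simp [hS, hCdef]
    grind
  rw [e] at s2 s3
  exact s1.trans (s2.symm.trans (sm.trans (s3.trans s4.symm)))

theorem slideAll (S : GRD) (a b u : ℝ) (hba : b < a) (hS : ∀ p ∈ S, b < p.1 ∧ p.1 < a)
    (hu : ∀ p ∈ S, p.2 ≠ u) (Y : Finset ℝ) :
    ∀ Z : Finset ℝ, Disjoint Y Z → u ∉ Y → u ∉ Z →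
    EE (S ∪ {a} ×ˢ Y ∪ {b} ×ˢ Z ∪ ({b, a} : Finset ℝ) ×ˢ {u})
      (S ∪ {b} ×ˢ (Y ∪ Z) ∪ ({b, a} : Finset ℝ) ×ˢ {u}) := by
  induction Y using Finset.induction_on with
  | empty =>
    intro Z _ _ _
    have : S ∪ {a} ×ˢ (∅ : Finset ℝ) ∪ {b} ×ˢ Z = S ∪ {b} ×ˢ (∅ ∪ Z) := by simp
    rw [this]
    exact EE.refl _
  | insert y Y hy ih =>
    intro Z hd huY huZ
    have s1 := slide1 (S ∪ {a} ×ˢ Y ∪ {b} ×ˢ Z) a b y u hba (by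
      intro p hp
      have := hS p
      simp at hp
      grind) (by
      intro p hp h
      have := hS p
      simp at hp hd
      grind) (by
      intro p hp h
      have := hu p
      simp at hp huY
      grind) (by simp at huY; tauto)
    have s2 := ih (insert y Z) (by
      simp at hd ⊢
      tauto) (by simp at huY; tauto) (by simp at huY; simp; tauto)
    have e1 : S ∪ {a} ×ˢ (insert y Y) ∪ {b} ×ˢ Z = insert (a, y) (S ∪ {a} ×ˢ Y ∪ {b} ×ˢ Z) := by
      ext ⟨x, t⟩
      simp
    have e2 : S ∪ {a} ×ˢ Y ∪ {b} ×ˢ (insert y Z) = insert (b, y) (S ∪ {a} ×ˢ Y ∪ {b} ×ˢ Z) := by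
      ext ⟨x, t⟩
      simp
    have e3 : insert y Y ∪ Z = Y ∪ insert y Z := by
      ext t
      simp
    rw [e1, e3]
    rw [e2] at s2
    exact s1.trans s2

theorem colRotate (S : GRD) (a b : ℝ) (hba : b < a) (hS : ∀ p ∈ S, b < p.1 ∧ p.1 < a)
    (Y : Finset ℝ) (hY : Y.Nonempty) : EE (S ∪ {a} ×ˢ Y) (S ∪ {b} ×ˢ Y) := by
  obtain ⟨u, hu⟩ := Infinite.exists_notMem_finset (S.image Prod.snd ∪ Y)
  have hu1 : ∀ p ∈ S, p.2 ≠ u := by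
    rintro p hp rfl
    exact hu (Finset.mem_union_left _ (Finset.mem_image_of_mem _ hp))
  have hu2 : u ∉ Y := fun h => hu (Finset.mem_union_right _ h)
  obtain ⟨y, hy⟩ := hY
  have key := slideAll S a b u hba hS hu1 Y ∅ (by simp) hu2 (by simp)
  have t1 : EE (S ∪ {a} ×ˢ Y) (insert (a, u) (S ∪ {a} ×ˢ Y)) := by
    apply EE.add
    refine ⟨(a, u), ?_, rfl, Or.inl ⟨⟨(a, y), by simp [hy], rfl⟩, ?_⟩⟩
    · have := hu1 (a, u)
      simp
      grind
    · intro w hw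
      have := hu1 w
      simp at hw
      grind
  have t2 : EE (insert (a, u) (S ∪ {a} ×ˢ Y)) (insert (b, u) (insert (a, u) (S ∪ {a} ×ˢ Y))) := by
    apply EE.add
    refine ⟨(b, u), ?_, rfl, Or.inr ⟨⟨(a, u), by simp, rfl⟩, ?_⟩⟩
    · have := hu1 (b, u)
      simp
      grind
    · intro w hw
      have := hS w
      simp at hw
      grind
  have t3 : EE (S ∪ {b} ×ˢ Y) (insert (b, u) (S ∪ {b} ×ˢ Y)) := by
    apply EE.add
    refine ⟨(b, u), ?_, rfl, Or.inl ⟨⟨(b, y), by simp [hy], rfl⟩, ?_⟩⟩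
    · have := hu1 (b, u)
      simp
      grind
    · intro w hw
      have := hu1 w
      simp at hw
      grind
  have t4 : EE (insert (b, u) (S ∪ {b} ×ˢ Y)) (insert (a, u) (insert (b, u) (S ∪ {b} ×ˢ Y))) := by
    apply EE.add
    refine ⟨(a, u), ?_, rfl, Or.inr ⟨⟨(b, u), by simp, rfl⟩, ?_⟩⟩
    · have := hu1 (a, u)
      simp
      grind
    · intro w hw
      have := hS w
      simp at hw
      grind
  have e1 : S ∪ {a} ×ˢ Y ∪ {b} ×ˢ (∅ : Finset ℝ) ∪ ({b, a} : Finset ℝ) ×ˢ {u}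
      = insert (b, u) (insert (a, u) (S ∪ {a} ×ˢ Y)) := by
    ext ⟨x, t⟩
    simp
  have e2 : S ∪ {b} ×ˢ (Y ∪ ∅) ∪ ({b, a} : Finset ℝ) ×ˢ {u}
      = insert (a, u) (insert (b, u) (S ∪ {b} ×ˢ Y)) := by
    ext ⟨x, t⟩
    simp
    grind
  rw [e1, e2] at key
  exact t1.trans (t2.trans (key.trans (t4.symm.trans t3.symm)))

theorem moveCol_eq (R : GRD) (a b : ℝ) :
    moveCol R a b = R.filter (fun p => p.1 ≠ a) ∪
      {b} ×ˢ ((R.filter (fun p => p.1 = a)).image Prod.snd) := by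
  unfold moveCol
  ext ⟨x, t⟩
  simp only [Finset.mem_image, Finset.mem_union, Finset.mem_filter, Finset.mem_product,
    Finset.mem_singleton, Prod.exists]
  constructor
  · rintro ⟨x', t', h, h2⟩
    split_ifs at h2 <;> grind
  · rintro (h | ⟨rfl, x', t', h, rfl⟩)
    · exact ⟨x, t, h.1, by simp [h.2]⟩
    · exact ⟨x', t', h.1, by simp [h.2]⟩

theorem col_self (R : GRD) (a : ℝ) :
    R = R.filter (fun p => p.1 ≠ a) ∪
      {a} ×ˢ ((R.filter (fun p => p.1 = a)).image Prod.snd) := by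
  ext ⟨x, t⟩
  simp
  grind

theorem colCyc (R : GRD) (a b : ℝ) (h : ∃ p ∈ R, p.1 = a)
    (h2 : ((∀ p ∈ R, p.1 ≤ a) ∧ ∀ p ∈ R, b < p.1) ∨
     ((∀ p ∈ R, a ≤ p.1) ∧ ∀ p ∈ R, p.1 < b)) : EE R (moveCol R a b) := by
  obtain ⟨p, hp, hpa⟩ := h
  have hY : ((R.filter (fun p => p.1 = a)).image Prod.snd).Nonempty :=
    ⟨p.2, Finset.mem_image_of_mem _ (by simp [hp, hpa])⟩
  rw [moveCol_eq]
  nth_rewrite 1 [col_self R a]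
  rcases h2 with ⟨h3, h4⟩ | ⟨h3, h4⟩
  · refine colRotate _ a b (hpa ▸ h4 p hp) ?_ _ hY
    intro q hq
    rw [Finset.mem_filter] at hq
    exact ⟨h4 q hq.1, lt_of_le_of_ne (h3 q hq.1) hq.2⟩
  · refine (colRotate _ b a (hpa ▸ h4 p hp) ?_ _ hY).symm
    intro q hq
    rw [Finset.mem_filter] at hq
    exact ⟨lt_of_le_of_ne (h3 q hq.1) (Ne.symm hq.2), h4 q hq.1⟩

noncomputable def sw (R : GRD) : GRD := R.image Prod.swap

theorem mem_sw (R : GRD) (x y : ℝ) : (x, y) ∈ sw R ↔ (y, x) ∈ R := by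
  simp [sw]

theorem sw_sw (R : GRD) : sw (sw R) = R := by
  ext ⟨x, y⟩
  simp [mem_sw]

theorem ball_sw (R : GRD) (P : ℝ × ℝ → Prop) : (∀ p ∈ sw R, P p) ↔ ∀ p ∈ R, P p.swap := by
  unfold sw
  rw [Finset.forall_mem_image]

theorem bex_sw (R : GRD) (P : ℝ × ℝ → Prop) : (∃ p ∈ sw R, P p) ↔ ∃ p ∈ R, P p.swap := by
  unfold sw
  rw [Finset.exists_mem_image]

theorem sw_image (R : GRD) (f g : ℝ × ℝ → ℝ × ℝ) (h : ∀ p, (f p).swap = g p.swap) :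
    sw (R.image f) = (sw R).image g := by
  unfold sw
  rw [Finset.image_image, Finset.image_image]
  apply Finset.image_congr
  intro p _
  exact h p

theorem sw_moveRow (R : GRD) (a b : ℝ) : sw (moveRow R a b) = moveCol (sw R) a b := by
  apply sw_image
  intro p
  dsimp
  split_ifs <;> rfl

theorem sw_swapRows (R : GRD) (a b : ℝ) : sw (swapRows R a b) = swapCols (sw R) a b := by
  apply sw_image
  intro p
  dsimp
  split_ifs <;> rfl

theorem sw_swapCols (R : GRD) (a b : ℝ) : sw (swapCols R a b) = swapRows (sw R) a b := by
  apply sw_image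
  intro p
  dsimp
  split_ifs <;> rfl

theorem sw_insert (R : GRD) (x y : ℝ) : sw (insert (x, y) R) = insert (y, x) (sw R) := by
  simp [sw]

theorem sw_erase (R : GRD) (x y : ℝ) : sw (R.erase (x, y)) = (sw R).erase (y, x) := by
  ext ⟨u, v⟩
  simp [mem_sw]
  tauto

theorem MM_sw {R R' : GRD} (h : MM R R') : MM (sw R) (sw R') := by
  rcases h with h | h | h | h
  · refine Or.inl ?_
    rcases h with ⟨a, b, h1, h2, h3, h4, h5, rfl⟩ | ⟨a, b, h1, h2, h3, h4, h5, rfl⟩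
    · refine Or.inr ⟨a, b, h1, ?_, ?_, ?_, ?_, sw_swapCols _ _ _⟩
      · rw [bex_sw]; exact h2
      · rw [bex_sw]; exact h3
      · rw [ball_sw]; exact h4
      · simp only [mem_sw]; exact h5
    · refine Or.inl ⟨a, b, h1, ?_, ?_, ?_, ?_, sw_swapRows _ _ _⟩
      · rw [bex_sw]; exact h2
      · rw [bex_sw]; exact h3
      · rw [ball_sw]; exact h4
      · simp only [mem_sw]; exact h5
  · refine Or.inr (Or.inl ?_)
    rcases h with ⟨a, y1, y2, ε, h1, h2, h3, h4, h5, h6⟩ | ⟨a, y1, y2, ε, h1, h2, h3, h4, h5, h6⟩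
    · refine Or.inr ⟨a, y1, y2, ε, h1, h2, ?_, ?_, ?_, ?_⟩
      · rw [mem_sw]; exact h3
      · rw [mem_sw]; exact h4
      · simp only [mem_sw]; exact h5
      · rcases h6 with ⟨h6, rfl⟩ | ⟨h6, rfl⟩
        · exact Or.inl ⟨by rw [ball_sw]; exact h6, by rw [sw_insert, sw_insert, sw_erase]⟩
        · exact Or.inr ⟨by rw [ball_sw]; exact h6, by rw [sw_insert, sw_insert, sw_erase]⟩
    · refine Or.inl ⟨a, y1, y2, ε, h1, h2, ?_, ?_, ?_, ?_⟩
      · rw [mem_sw]; exact h3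
      · rw [mem_sw]; exact h4
      · simp only [mem_sw]; exact h5
      · rcases h6 with ⟨h6, rfl⟩ | ⟨h6, rfl⟩
        · exact Or.inl ⟨by rw [ball_sw]; exact h6, by rw [sw_insert, sw_insert, sw_erase]⟩
        · exact Or.inr ⟨by rw [ball_sw]; exact h6, by rw [sw_insert, sw_insert, sw_erase]⟩
  · refine Or.inr (Or.inr (Or.inl ?_))
    obtain ⟨⟨x, y⟩, h1, rfl, h2⟩ := h
    refine ⟨(y, x), by rw [mem_sw]; exact h1, sw_insert _ _ _, ?_⟩
    rw [bex_sw, bex_sw, ball_sw, ball_sw]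
    exact h2.symm
  · refine Or.inr (Or.inr (Or.inr ?_))
    obtain ⟨f, g, hf, hg, rfl⟩ := h
    exact ⟨g, f, hg, hf, sw_image _ _ _ (fun _ => rfl)⟩

theorem EE_sw {R R' : GRD} (h : EE R R') : EE (sw R) (sw R') := by
  induction h with
  | rel _ _ h => exact Relation.EqvGen.rel _ _ (MM_sw h)
  | refl _ => exact EE.refl _
  | symm _ _ _ ih => exact ih.symm
  | trans _ _ _ _ _ ih1 ih2 => exact ih1.trans ih2

theorem cyc_EE {R R' : GRD} (h : CyclicPermutation R R') : EE R R' := by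
  rcases h with ⟨a, b, h1, h2, rfl⟩ | ⟨a, b, h1, h2, rfl⟩
  · exact colCyc R a b h1 h2
  · have := colCyc (sw R) a b (by rw [bex_sw]; exact h1) (by
      simp only [ball_sw]; exact h2)
    rw [← sw_moveRow] at this
    have := EE_sw this
    rwa [sw_sw, sw_sw] at this

theorem stab_EE {R R' : GRD} (h : Stab false R R') : EE R R' := by
  obtain ⟨x, y, x', y', hxy, ho, h1, h2, h3, h4, rfl⟩ := h
  simp only [Bool.false_eq_true, if_false] at ho
  have hyy : y' ≠ y := by rcases ho with h | h <;> [exact h.2.ne'; exact h.2.ne]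
  have s1 : EE R (insert (x, y') R) := by
    apply EE.add
    exact ⟨(x, y'), fun h => h4 _ h rfl, rfl, Or.inl ⟨⟨_, hxy, rfl⟩, h4⟩⟩
  refine s1.trans (EE.shift ?_)
  unfold strictlyBetween at h1 h2
  rcases ho with ⟨ha, hb⟩ | ⟨ha, hb⟩
  · refine Or.inl ⟨x, y, y', x - x', by linarith, hb, by simp [hxy], by simp, ?_, Or.inr ⟨?_, ?_⟩⟩
    · intro t ht hh
      have := h2 (x, t)
      simp at ht
      grind
    · intro p hp hh
      have := h1 p
      have := h3 p
      simp at hp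
      grind
    · ext ⟨u, v⟩
      simp
      grind
  · refine Or.inl ⟨x, y', y, x' - x, by linarith, hb, by simp, by simp [hxy], ?_, Or.inl ⟨?_, ?_⟩⟩
    · intro t ht hh
      have := h2 (x, t)
      simp at ht
      grind
    · intro p hp hh
      have := h1 p
      have := h3 p
      simp at hp
      grind
    · ext ⟨u, v⟩
      simp
      grind

/-- the equivalence relation on generalized rectangular diagrams generated
by the elementary moves of type N coincides with the equivalence relation generated by
commutations, end shifts of type N and vertex additions alone (diagrams being
identified up to combinatorial equivalence throughout). -/
theorem statement1 :
    Relation.EqvGen (Step false) =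
      Relation.EqvGen (fun R R' : GRD =>
        Commutation R R' ∨ EndShift false R R' ∨ VertexAddition R R' ∨ CombEquiv R R') := by
  change _ = EE
  funext R R'
  apply propext
  constructor
  · intro h
    induction h with
    | rel A B h =>
      rcases h with (h | h | h | h | h | h) | h
      · exact cyc_EE h
      · exact EE.comm h
      · exact stab_EE h
      · exact (stab_EE h).symm
      · exact EE.shift h
      · exact EE.add h
      · exact EE.comb h
    | refl _ => exact EE.refl _
    | symm _ _ _ ih => exact ih.symm
    | trans _ _ _ _ _ ih1 ih2 => exact ih1.trans ih2
  · intro h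
    induction h with
    | rel A B h =>
      apply Relation.EqvGen.rel
      rcases h with h | h | h | h
      · exact Or.inl (Or.inr (Or.inl h))
      · exact Or.inl (Or.inr (Or.inr (Or.inr (Or.inr (Or.inl h)))))
      · exact Or.inl (Or.inr (Or.inr (Or.inr (Or.inr (Or.inr h)))))
      · exact Or.inr h
    | refl _ => exact Relation.EqvGen.refl _
    | symm _ _ _ ih => exact Relation.EqvGen.symm _ _ ih
    | trans _ _ _ _ _ ih1 ih2 => exact Relation.EqvGen.trans _ _ _ ih1 ih2

end RectDiag
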